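/- For every real number c there exists a function f : [0,∞) → ℝ, C² on [0,∞), with f(0) = 0 and f'(0) = c, solving f''(x) + f(x)³/(sinh x)² = 0 for all x > 0. (That is, every local solution regular at x = 0 extends globally to all x ≥ 0.) -/

import Mathlib

/-!
The singular term `f³ / sinh² x` is harmless along functions with `|f x| ≤ C |x|`, since
`|x| ≤ |sinh x|`. Fix `C = |c| + 1` and write `clamp M y` for the projection of `y` to `[-M, M]`.
The first-order system

  `f' = clamp C v`,  `v' = -(clamp (C |x|) f)³ / sinh² x`,  `f 0 = 0`, `v 0 = c`,

has a right-hand side that is continuous, bounded on bounded time intervals and globally Lipschitz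
in the state, so it has a solution on all of `ℝ` (`exists_global_solution`).

On `[0, ∞)` neither truncation is active. For `f` this holds because `|f'| ≤ C` gives
`|f x| ≤ C |x|`. For `v`, let `Φ` be the `C¹` function with `Φ' = 2 clamp C` and `Φ v = v²` for
`|v| ≤ C` (`energy`). The quantity `2 Φ(v) + f⁴ / sinh² x`, which is the Lyapunov function `G` as
long as `|v| ≤ C`, has derivative `-2 f⁴ cosh x / sinh³ x ≤ 0`, whence `Φ (v x) ≤ Φ c = c² < C²`
and so `|v x| ≤ C`. Thus `f' = v` and `f'' = -f³ / sinh² x`.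
-/

open Set Filter Topology Asymptotics
open scoped NNReal

/-- Global existence for an ODE whose right-hand side is globally Lipschitz in the state and
bounded on bounded time intervals. The boundedness lets Picard-Lindelöf produce a solution on
`[-n, n]` in one step, and uniqueness makes these solutions agree on overlaps. -/
lemma exists_global_solution {E : Type*} [NormedAddCommGroup E] [NormedSpace ℝ E] [CompleteSpace E]
    (W : ℝ → E → E) (K : ℝ≥0) (hL : ∀ t, LipschitzWith K (W t))
    (hc : ∀ y, Continuous fun t => W t y)
    (hB : ∀ T : ℝ, ∃ L : ℝ≥0, ∀ t, |t| ≤ T → ∀ y, ‖W t y‖ ≤ L) (x₀ : E) :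
    ∃ α : ℝ → E, α 0 = x₀ ∧ ∀ t, HasDerivAt α (W t (α t)) t := by
  have loc : ∀ n : ℕ, ∃ α : ℝ → E, α 0 = x₀ ∧
      ∀ t ∈ Ioo (-((n : ℝ) + 1)) (n + 1), HasDerivAt α (W t (α t)) t := by
    intro n
    obtain ⟨L, hL'⟩ := hB (n + 1)
    have hn : (0 : ℝ) ≤ n := n.cast_nonneg
    have h0 : (0 : ℝ) ∈ Icc (-((n : ℝ) + 1)) (n + 1) := ⟨by linarith, by linarith⟩
    have hP : IsPicardLindelof W (⟨0, h0⟩ : Icc (-((n : ℝ) + 1)) (n + 1)) x₀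
        (L * (n + 1)) 0 L K :=
      { lipschitzOnWith := fun t _ => (hL t).lipschitzOnWith
        continuousOn := fun y _ => (hc y).continuousOn
        norm_le := fun t ht y _ => hL' t (abs_le.2 ht) y
        mul_max_le := by simp }
    obtain ⟨α, h1, h2⟩ := hP.exists_eq_forall_mem_Icc_hasDerivWithinAt₀
    exact ⟨α, h1, fun t ht => (h2 t (Ioo_subset_Icc_self ht)).hasDerivAt (Icc_mem_nhds ht.1 ht.2)⟩
  choose α hα0 hα using loc
  have huniq : ∀ m n : ℕ, m ≤ n → EqOn (α m) (α n) (Ioo (-((m : ℝ) + 1)) (m + 1)) := by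
    intro m n hmn
    have hm : (0 : ℝ) ≤ m := m.cast_nonneg
    have hmn' : (m : ℝ) ≤ n := by exact_mod_cast hmn
    refine ODE_solution_unique_of_mem_Ioo (v := W) (s := fun _ => univ) (K := K) (t₀ := 0)
      (fun t _ => (hL t).lipschitzOnWith) ⟨by linarith, by linarith⟩
      (fun t ht => ⟨hα m t ht, mem_univ _⟩)
      (fun t ht => ⟨hα n t ⟨by linarith [ht.1], by linarith [ht.2]⟩, mem_univ _⟩) ?_
    rw [hα0, hα0]
  have hmem : ∀ (n : ℕ) (t : ℝ), |t| < n + 1 → α ⌈|t|⌉₊ t = α n t := by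
    intro n t ht
    have h1 : t ∈ Ioo (-((⌈|t|⌉₊ : ℝ) + 1)) (⌈|t|⌉₊ + 1) :=
      abs_lt.1 (lt_of_le_of_lt (Nat.le_ceil |t|) (lt_add_one _))
    rcases le_total ⌈|t|⌉₊ n with h | h
    · exact huniq _ _ h h1
    · exact (huniq _ _ h (abs_lt.1 ht)).symm
  refine ⟨fun t => α ⌈|t|⌉₊ t, by simp [hα0], fun t => ?_⟩
  have ht : |t| < (⌈|t|⌉₊ : ℝ) + 1 := lt_of_le_of_lt (Nat.le_ceil |t|) (lt_add_one _)
  refine (hα ⌈|t|⌉₊ t (abs_lt.1 ht)).congr_of_eventuallyEq ?_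
  filter_upwards [continuous_abs.continuousAt.eventually_lt_const ht] with s hs
  exact hmem _ s hs

/-- The projection of `y` to the interval `[-M, M]` (meaningful for `0 ≤ M`). -/
noncomputable def clamp (M y : ℝ) : ℝ := max (-M) (min M y)

lemma abs_clamp_le {M : ℝ} (hM : 0 ≤ M) (y : ℝ) : |clamp M y| ≤ M :=
  abs_le.2 ⟨le_max_left _ _, max_le (by linarith) (min_le_left _ _)⟩

lemma clamp_of_abs_le {M y : ℝ} (h : |y| ≤ M) : clamp M y = y := by
  rw [clamp, min_eq_right (abs_le.1 h).2, max_eq_right (abs_le.1 h).1]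

lemma abs_clamp_sub_le (M y z : ℝ) : |clamp M y - clamp M z| ≤ |y - z| := by
  have := abs_max_sub_max_le_max (-M) (min M y) (-M) (min M z)
  have h2 := abs_min_sub_min_le_max M y M z
  simp only [sub_self, abs_zero] at this h2
  rw [max_eq_right (abs_nonneg (min M y - min M z))] at this
  rw [max_eq_right (abs_nonneg (y - z))] at h2
  exact this.trans h2

/-- The primitive of `2 * clamp M` that equals `v ^ 2` on `[-M, M]`. -/
noncomputable def energy (M v : ℝ) : ℝ := 2 * v * clamp M v - clamp M v ^ 2

/-- Since `clamp M` is nondecreasing and 1-Lipschitz, `energy M` differs from its tangent line by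
at most a square. -/
lemma abs_energy_sub_le {M : ℝ} (hM : 0 ≤ M) (v w : ℝ) :
    |energy M w - energy M v - (w - v) * (2 * clamp M v)| ≤ |w - v| ^ 2 := by
  rw [sq_abs]
  unfold energy clamp
  rcases le_total M v with h1 | h1 <;> rcases le_total M w with h2 | h2 <;>
  rcases le_total (-M) v with h3 | h3 <;> rcases le_total (-M) w with h4 | h4 <;>
  simp only [min_eq_left, min_eq_right, max_eq_left, max_eq_right, h1, h2, h3, h4,
    neg_le_self hM] <;>
  rw [abs_le] <;> constructor <;> nlinarith

lemma hasDerivAt_energy {M : ℝ} (hM : 0 ≤ M) (v : ℝ) :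
    HasDerivAt (energy M) (2 * clamp M v) v := by
  rw [hasDerivAt_iff_isLittleO]
  refine IsBigO.trans_isLittleO ?_ (isLittleO_pow_sub_sub v one_lt_two)
  refine IsBigO.of_bound 1 (Eventually.of_forall fun w => ?_)
  simpa using abs_energy_sub_le hM v w

lemma abs_le_of_energy_lt {M v : ℝ} (hM : 0 ≤ M) (h : energy M v < M ^ 2) : |v| ≤ M := by
  unfold energy clamp at h
  rw [abs_le]
  constructor
  · by_contra! h1
    rw [min_eq_right (by linarith), max_eq_left h1.le] at h
    nlinarith
  · by_contra! h1
    rw [min_eq_left h1.le, max_eq_right (by linarith)] at h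
    nlinarith

/-- The truncated nonlinearity `-f³ / sinh² t`. At `t = 0` its value is `0`, by the convention on
division by zero, and this is the continuous extension. -/
noncomputable def force (C t y : ℝ) : ℝ := -(clamp (C * |t|) y ^ 3 / Real.sinh t ^ 2)

lemma sq_le_sinh_sq (t : ℝ) : |t| ^ 2 ≤ Real.sinh t ^ 2 := by
  rw [← sq_abs (Real.sinh t), Real.abs_sinh]
  exact pow_le_pow_left₀ (abs_nonneg t) (Real.self_le_sinh_iff.2 (abs_nonneg t)) 2

lemma abs_force_le {C : ℝ} (hC : 0 ≤ C) (t y : ℝ) : |force C t y| ≤ C ^ 3 * |t| := by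
  have hk := abs_clamp_le (mul_nonneg hC (abs_nonneg t)) y
  rw [force, abs_neg, abs_div, abs_pow, abs_of_nonneg (sq_nonneg (Real.sinh t))]
  refine div_le_of_le_mul₀ (sq_nonneg _) (by positivity) ?_
  calc |clamp (C * |t|) y| ^ 3 ≤ (C * |t|) ^ 3 := pow_le_pow_left₀ (abs_nonneg _) hk 3
    _ = C ^ 3 * |t| * |t| ^ 2 := by ring
    _ ≤ _ := mul_le_mul_of_nonneg_left (sq_le_sinh_sq t) (by positivity)

lemma abs_force_sub_le {C : ℝ} (hC : 0 ≤ C) (t y z : ℝ) :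
    |force C t y - force C t z| ≤ 3 * C ^ 2 * |y - z| := by
  have hM : 0 ≤ C * |t| := mul_nonneg hC (abs_nonneg t)
  have ha := abs_clamp_le hM y
  have hb := abs_clamp_le hM z
  have hab := abs_clamp_sub_le (C * |t|) y z
  unfold force
  set a := clamp (C * |t|) y
  set b := clamp (C * |t|) z
  have e : -(a ^ 3 / Real.sinh t ^ 2) - -(b ^ 3 / Real.sinh t ^ 2)
      = -((a - b) * (a ^ 2 + a * b + b ^ 2) / Real.sinh t ^ 2) := by ring
  have hq : |a ^ 2 + a * b + b ^ 2| ≤ 3 * (C * |t|) ^ 2 := by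
    have h1 : a ^ 2 ≤ (C * |t|) ^ 2 := sq_le_sq' (abs_le.1 ha).1 (abs_le.1 ha).2
    have h2 : b ^ 2 ≤ (C * |t|) ^ 2 := sq_le_sq' (abs_le.1 hb).1 (abs_le.1 hb).2
    rw [abs_le]
    constructor <;> nlinarith [sq_nonneg (a - b), sq_nonneg (a + b)]
  rw [e, abs_neg, abs_div, abs_mul, abs_of_nonneg (sq_nonneg (Real.sinh t))]
  refine div_le_of_le_mul₀ (sq_nonneg _) (by positivity) ?_
  calc |a - b| * |a ^ 2 + a * b + b ^ 2| ≤ |y - z| * (3 * (C * |t|) ^ 2) := by gcongr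
    _ = 3 * C ^ 2 * |y - z| * |t| ^ 2 := by ring
    _ ≤ _ := mul_le_mul_of_nonneg_left (sq_le_sinh_sq t) (by positivity)

lemma continuous_force {C : ℝ} (hC : 0 ≤ C) : Continuous fun p : ℝ × ℝ => force C p.1 p.2 := by
  rw [continuous_iff_continuousAt]
  rintro ⟨t, y⟩
  rcases eq_or_ne t 0 with rfl | ht
  · have h0 : force C 0 y = 0 := by simp [force]
    rw [ContinuousAt, h0]
    refine squeeze_zero_norm (a := fun p : ℝ × ℝ => C ^ 3 * |p.1|)
      (fun p => abs_force_le hC p.1 p.2) ?_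
    have : Continuous fun p : ℝ × ℝ => C ^ 3 * |p.1| := by fun_prop
    simpa using this.tendsto ((0 : ℝ), y)
  · unfold force clamp
    have : Real.sinh t ^ 2 ≠ 0 := pow_ne_zero _ (Real.sinh_ne_zero.2 ht)
    have h3 : ContinuousAt (fun p : ℝ × ℝ => Real.sinh p.1 ^ 2) (t, y) :=
      Continuous.continuousAt (by fun_prop)
    have h4 : ContinuousAt
        (fun p : ℝ × ℝ => max (-(C * |p.1|)) (min (C * |p.1|) p.2) ^ 3) (t, y) :=
      Continuous.continuousAt (by fun_prop)
    exact (h4.div h3 this).neg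

lemma exists_truncated_solution {C : ℝ} (hC : 0 ≤ C) (c : ℝ) :
    ∃ f v : ℝ → ℝ, f 0 = 0 ∧ v 0 = c ∧ (∀ t, HasDerivAt f (clamp C (v t)) t) ∧
      ∀ t, HasDerivAt v (force C t (f t)) t := by
  let W : ℝ → ℝ × ℝ → ℝ × ℝ := fun t p => (clamp C p.2, force C t p.1)
  let K : ℝ≥0 := max 1 ⟨3 * C ^ 2, by positivity⟩
  have hK1 : (1 : ℝ) ≤ K := NNReal.coe_le_coe.2 (le_max_left 1 _)
  have hK2 : 3 * C ^ 2 ≤ (K : ℝ) :=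
    NNReal.coe_le_coe.2 (le_max_right 1 (⟨3 * C ^ 2, by positivity⟩ : ℝ≥0))
  have hL : ∀ t, LipschitzWith K (W t) := by
    refine fun t => LipschitzWith.of_dist_le_mul fun p q => ?_
    rw [Prod.dist_eq, Prod.dist_eq]
    simp only [Real.dist_eq, W]
    refine max_le ?_ ?_
    · calc _ ≤ |p.2 - q.2| := abs_clamp_sub_le C p.2 q.2
        _ ≤ 1 * max |p.1 - q.1| |p.2 - q.2| := by rw [one_mul]; exact le_max_right _ _
        _ ≤ _ := by gcongr
    · refine (abs_force_sub_le hC t p.1 q.1).trans ?_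
      gcongr
      exact le_max_left _ _
  have hc : ∀ p, Continuous fun t => W t p := fun p => continuous_const.prodMk
    ((continuous_force hC).comp (continuous_id.prodMk continuous_const))
  have hB : ∀ T : ℝ, ∃ L : ℝ≥0, ∀ t, |t| ≤ T → ∀ p, ‖W t p‖ ≤ L := by
    refine fun T => ⟨(max C (C ^ 3 * T)).toNNReal, fun t ht p => ?_⟩
    rw [Real.coe_toNNReal _ (hC.trans (le_max_left _ _)), Prod.norm_def]
    refine max_le_max (abs_clamp_le hC p.2) ((abs_force_le hC t p.1).trans ?_)
    gcongr
  obtain ⟨α, h0, hα⟩ := exists_global_solution W K hL hc hB (0, c)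
  refine ⟨fun t => (α t).1, fun t => (α t).2, by simp [h0], by simp [h0], fun t => ?_, fun t => ?_⟩
  · exact (hα t).fst
  · exact (hα t).snd

/-- Monotonicity of the Lyapunov function, which shows that the truncation of `v` is never active
for nonnegative times. -/
lemma abs_le_of_truncated_solution {C c : ℝ} (hc : |c| < C) {f v : ℝ → ℝ} (hf0 : f 0 = 0)
    (hv0 : v 0 = c) (hf : ∀ t, HasDerivAt f (clamp C (v t)) t)
    (hv : ∀ t, HasDerivAt v (force C t (f t)) t)
    (hforce : ∀ t, force C t (f t) = -(f t ^ 3 / Real.sinh t ^ 2)) {t : ℝ} (ht : 0 ≤ t) :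
    |v t| ≤ C := by
  have hC : 0 ≤ C := (abs_nonneg c).trans hc.le
  have hcf : Continuous f := continuous_iff_continuousAt.2 fun t => (hf t).continuousAt
  have hcv : Continuous v := continuous_iff_continuousAt.2 fun t => (hv t).continuousAt
  set G : ℝ → ℝ := fun t => 2 * energy C (v t) - f t * force C t (f t) with hG
  have hGc : Continuous G := by
    have h1 : Continuous (energy C) :=
      continuous_iff_continuousAt.2 fun t => (hasDerivAt_energy hC t).continuousAt
    exact (continuous_const.mul (h1.comp hcv)).sub
      (hcf.mul ((continuous_force hC).comp (continuous_id.prodMk hcf)))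
  have hG' : G = fun t => 2 * energy C (v t) + f t ^ 4 / Real.sinh t ^ 2 := by
    funext s
    simp only [hG, hforce]
    ring
  have hGd : ∀ s, 0 < s → HasDerivAt G (-2 * f s ^ 4 * Real.cosh s / Real.sinh s ^ 3) s := by
    intro s hs
    have hs0 : Real.sinh s ≠ 0 := Real.sinh_ne_zero.2 hs.ne'
    rw [hG']
    have h1 := ((hasDerivAt_energy hC (v s)).comp s (hv s)).const_mul 2
    have h2 := ((hf s).pow 4).div ((Real.hasDerivAt_sinh s).pow 2) (pow_ne_zero 2 hs0)
    refine (h1.add h2).congr_deriv ?_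
    rw [hforce]
    simp only [Pi.pow_apply]
    field_simp
    push_cast
    ring
  have hanti : AntitoneOn G (Ici 0) := by
    refine antitoneOn_of_deriv_nonpos (convex_Ici 0) hGc.continuousOn ?_ ?_
    · rw [interior_Ici]
      exact fun s hs => (hGd s hs).differentiableAt.differentiableWithinAt
    · rw [interior_Ici]
      intro s hs
      rw [(hGd s hs).deriv]
      have h1 : 0 < Real.sinh s := Real.sinh_pos_iff.2 hs
      have h2 : 0 < Real.cosh s := Real.cosh_pos s
      have h3 : 0 ≤ f s ^ 4 * Real.cosh s / Real.sinh s ^ 3 := by positivity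
      calc _ = -2 * (f s ^ 4 * Real.cosh s / Real.sinh s ^ 3) := by ring
        _ ≤ 0 := by linarith
  have h0 : G 0 = 2 * c ^ 2 := by
    simp only [hG, hf0, hv0, energy, clamp_of_abs_le hc.le]
    ring
  have h1 : G t ≤ 2 * c ^ 2 := h0 ▸ hanti self_mem_Ici ht ht
  have h2 : 2 * energy C (v t) ≤ G t := by
    rw [hG']
    have : 0 ≤ f t ^ 4 / Real.sinh t ^ 2 := by positivity
    simp only
    linarith
  have h3 : c ^ 2 < C ^ 2 := sq_lt_sq.2 (by rwa [abs_of_nonneg hC])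
  exact abs_le_of_energy_lt hC (by linarith)

/-- Global existence: for every `c` there is a `C²` function on `[0,∞)` with
`f(0) = 0`, `f'(0) = c`, solving `f'' + f³/sinh²x = 0` for all `x > 0`. -/
theorem cubic_wave_global_existence (c : ℝ) :
    ∃ f : ℝ → ℝ,
      ContDiffOn ℝ 2 f (Set.Ici 0) ∧
      f 0 = 0 ∧
      derivWithin f (Set.Ici 0) 0 = c ∧
      ∀ x : ℝ, 0 < x →
        deriv (deriv f) x + (f x) ^ 3 / (Real.sinh x) ^ 2 = 0 := by
  have hC : 0 ≤ |c| + 1 := by positivity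
  obtain ⟨f, v, hf0, hv0, hf, hv⟩ := exists_truncated_solution hC c
  have hfb : ∀ t, |f t| ≤ (|c| + 1) * |t| := by
    intro t
    have := Convex.norm_image_sub_le_of_norm_hasDerivWithin_le (f := f) (s := univ)
      (fun x _ => (hf x).hasDerivWithinAt) (fun x _ => abs_clamp_le hC (v x)) convex_univ
      (mem_univ 0) (mem_univ t)
    simpa [hf0] using this
  have hforce : ∀ t, force (|c| + 1) t (f t) = -(f t ^ 3 / Real.sinh t ^ 2) := fun t => by
    rw [force, clamp_of_abs_le (hfb t)]
  have hvb : ∀ t, 0 ≤ t → |v t| ≤ |c| + 1 := fun t ht =>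
    abs_le_of_truncated_solution (lt_add_one _) hf0 hv0 hf hv hforce ht
  have hf' : ∀ t, 0 ≤ t → HasDerivAt f (v t) t := fun t ht => by
    simpa only [clamp_of_abs_le (hvb t ht)] using hf t
  have hdw : ∀ t ∈ Ici (0 : ℝ), derivWithin f (Ici 0) t = v t := fun t ht =>
    (hf' t ht).hasDerivWithinAt.derivWithin (uniqueDiffOn_Ici 0 t ht)
  have hcf : Continuous f := continuous_iff_continuousAt.2 fun t => (hf t).continuousAt
  have hv1 : ContDiff ℝ 1 v := by
    rw [contDiff_one_iff_deriv]
    refine ⟨fun t => (hv t).differentiableAt, ?_⟩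
    rw [funext fun t => (hv t).deriv]
    exact (continuous_force hC).comp (continuous_id.prodMk hcf)
  refine ⟨f, ?_, hf0, by rw [hdw 0 self_mem_Ici, hv0], fun x hx => ?_⟩
  · rw [show (2 : WithTop ℕ∞) = 1 + 1 from one_add_one_eq_two.symm,
      contDiffOn_succ_iff_derivWithin (uniqueDiffOn_Ici 0)]
    exact ⟨fun t _ => (hf t).differentiableAt.differentiableWithinAt, by simp,
      hv1.contDiffOn.congr hdw⟩
  · have hev : deriv f =ᶠ[𝓝 x] v := by
      filter_upwards [Ioi_mem_nhds hx] with y hy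
      exact (hf' y (le_of_lt hy)).deriv
    rw [hev.deriv_eq, (hv x).deriv, hforce]
    ring
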